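/- arXiv:2109.11578 — 2 statements merged into one kernel-verified Lean document; each statement's English description precedes it below -/
import Mathlib

section
/- Let N be a nilpotent endomorphism of a finite-dimensional complex vector space H. Then there exists a unique increasing filtration (W_i)_{i∈ℤ} of H by subspaces, with W_i = 0 for i sufficiently small and W_i = H for i sufficiently large, such that N(W_i) ⊆ W_{i−2} for all i ∈ ℤ and, for every i ≥ 0, the map Gr^W_i H → Gr^W_{−i} H induced by N^i is an isomorphism, where Gr^W_i H = W_i/W_{i−1}. -/
namespace Paper

/-! ### Graded quotients -/

/-- The quotient of a subspace `p` by (the trace of) a subspace `q`. -/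
abbrev GrQ {M : Type*} [AddCommGroup M] [Module ℂ M] (p q : Submodule ℂ M) :=
  p ⧸ Submodule.comap p.subtype q

/-- The map induced on the quotients `p/q → p'/q'` by a linear map sending `p` into `p'`
and `q` into `q'`. -/
def inducedQuot {M₁ M₂ : Type*} [AddCommGroup M₁] [Module ℂ M₁] [AddCommGroup M₂] [Module ℂ M₂]
    (f : M₁ →ₗ[ℂ] M₂) (p q : Submodule ℂ M₁) (p' q' : Submodule ℂ M₂)
    (h1 : p ≤ Submodule.comap f p') (h2 : q ≤ Submodule.comap f q') :
    GrQ p q →ₗ[ℂ] GrQ p' q' :=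
  Submodule.mapQ _ _ (f.restrict fun x hx => Submodule.mem_comap.mp (h1 hx))
    (by
      intro x hx
      simp only [Submodule.mem_comap, Submodule.subtype_apply] at hx ⊢
      have hfx : f (x : M₁) ∈ q' := Submodule.mem_comap.mp (h2 hx)
      simpa [LinearMap.restrict_apply] using hfx)

variable {H : Type*} [AddCommGroup H] [Module ℂ H]

/-! ### Weight filtrations -/

/-- `W` is the weight filtration of the nilpotent endomorphism `N`: an increasing filtration,
equal to `0` for small indices and to the whole space for large indices, such that
`N (W i) ⊆ W (i - 2)` and such that for every `i ≥ 0` the map `Gr_i → Gr_{-i}` induced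
by `N ^ i` on the graded pieces `Gr_i = W i / W (i-1)` is an isomorphism. -/
structure IsWeightFiltration (N : Module.End ℂ H) (W : ℤ → Submodule ℂ H) : Prop where
  mono : Monotone W
  eventually_bot : ∃ a : ℤ, ∀ i ≤ a, W i = ⊥
  eventually_top : ∃ b : ℤ, ∀ i : ℤ, b ≤ i → W i = ⊤
  map_le : ∀ i : ℤ, W i ≤ Submodule.comap N (W (i - 2))
  gr_bijective : ∀ i : ℕ,
    ∀ (h1 : W (i : ℤ) ≤ Submodule.comap (N ^ i) (W (-(i : ℤ))))
      (h2 : W ((i : ℤ) - 1) ≤ Submodule.comap (N ^ i) (W (-(i : ℤ) - 1))),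
      Function.Bijective
        (inducedQuot (N ^ i) (W (i : ℤ)) (W ((i : ℤ) - 1)) (W (-(i : ℤ))) (W (-(i : ℤ) - 1))
          h1 h2)

/-!
A filtration `W` of the required kind is strict: `W (-i) = N ^ i (W i)` and `W (i - 1)` is the
preimage of `W (-i - 1)` under `N ^ i`, both by descending induction on `i`. Hence
`W m = (N ^ (m + 1))⁻¹ (N ^ (m + 2) (W (m + 2)))` for `m ≥ 0`, so that `W` is determined from
the top downwards. Strictness also forces `ker (N ^ k) ≤ W (k - 1)`, and the smallest family with
this property and `N (W i) ≤ W (i - 2)` turns out to be a solution.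
-/

theorem forall_nat_of_forall_ge_of_succ {P : ℕ → Prop} (b : ℕ) (ge : ∀ n, b ≤ n → P n)
    (of_succ : ∀ n, P (n + 1) → P n) (n : ℕ) : P n :=
  Nat.decreasingInduction (motive := fun m _ => P m) (fun m _ => of_succ m)
    (ge _ (le_max_right n b)) (le_max_left n b)

section Module

variable {R M : Type*} [Ring R] [AddCommGroup M] [Module R M]

theorem map_pow_le_of_map_le {N : Module.End R M} {W : ℤ → Submodule R M} (hmono : Monotone W)
    (hmap : ∀ i : ℤ, (W i).map N ≤ W (i - 2)) {k : ℕ} {i j : ℤ} (hij : i - 2 * k ≤ j) :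
    (W i).map (N ^ k) ≤ W j := by
  induction k generalizing j with
  | zero =>
    rw [pow_zero, Module.End.one_eq_id, Submodule.map_id]
    exact hmono (by lia)
  | succ k ih =>
    calc (W i).map (N ^ (k + 1))
        = ((W i).map (N ^ k)).map N := by rw [pow_succ', Module.End.mul_eq_comp, Submodule.map_comp]
      _ ≤ (W (i - 2 * k)).map N := Submodule.map_mono (ih le_rfl)
      _ ≤ W (i - 2 * k - 2) := hmap _
      _ ≤ W j := hmono (by lia)

/-- The weight filtrations of an endomorphism `N` of a module over an arbitrary ring. The
injectivity and surjectivity of the map `W i / W (i - 1) → W (-i) / W (-i - 1)` induced by `N ^ i`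
are expressed in the lattice of submodules, without forming the quotients. -/
structure IsMonodromyFiltration (N : Module.End R M) (W : ℤ → Submodule R M) : Prop where
  mono : Monotone W
  eventually_bot : ∃ a : ℤ, ∀ i ≤ a, W i = ⊥
  eventually_top : ∃ b : ℤ, ∀ i : ℤ, b ≤ i → W i = ⊤
  map_le : ∀ i : ℤ, (W i).map N ≤ W (i - 2)
  gr_injective : ∀ i : ℕ, W i ⊓ (W (-i - 1)).comap (N ^ i) ≤ W (i - 1)
  gr_surjective : ∀ i : ℕ, W (-i) ≤ (W i).map (N ^ i) ⊔ W (-i - 1)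

namespace IsMonodromyFiltration

variable {N : Module.End R M} {W W' : ℤ → Submodule R M}

theorem neg_eq_map_pow (h : IsMonodromyFiltration N W) (i : ℕ) :
    W (-i) = (W i).map (N ^ i) := by
  refine le_antisymm ?_ (map_pow_le_of_map_le h.mono h.map_le (by lia))
  obtain ⟨a, ha⟩ := h.eventually_bot
  induction i using forall_nat_of_forall_ge_of_succ (-a).toNat with
  | ge i hi => exact (ha _ (by lia)).trans_le bot_le
  | of_succ i ih =>
    have image_succ : W (-i - 1) ≤ (W i).map (N ^ i) :=
      calc W (-i - 1)
          = W (-(i + 1 : ℕ)) := by congr 1; lia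
        _ ≤ (W (i + 1 : ℕ)).map (N ^ (i + 1)) := ih
        _ = ((W (i + 1 : ℕ)).map N).map (N ^ i) := by
          rw [pow_succ, Module.End.mul_eq_comp, Submodule.map_comp]
        _ ≤ (W i).map (N ^ i) := Submodule.map_mono ((h.map_le _).trans (h.mono (by lia)))
    exact (h.gr_surjective i).trans (sup_le le_rfl image_succ)

theorem comap_pow_eq (h : IsMonodromyFiltration N W) (i : ℕ) :
    (W (-i - 1)).comap (N ^ i) = W (i - 1) := by
  refine le_antisymm ?_ <| Submodule.map_le_iff_le_comap.mp <|
    map_pow_le_of_map_le h.mono h.map_le (by lia)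
  obtain ⟨b, hb⟩ := h.eventually_top
  induction i using forall_nat_of_forall_ge_of_succ (b + 1).toNat with
  | ge i hi => exact le_top.trans_eq (hb _ (by lia)).symm
  | of_succ i ih =>
    have preimage_succ : (W (-i - 1)).comap (N ^ i) ≤ W i :=
      calc (W (-i - 1)).comap (N ^ i)
          ≤ ((W (-(i + 1 : ℕ) - 1)).comap N).comap (N ^ i) :=
            Submodule.comap_mono <| Submodule.map_le_iff_le_comap.mp <|
              (h.map_le _).trans (h.mono (by lia))
        _ = (W (-(i + 1 : ℕ) - 1)).comap (N ^ (i + 1)) := by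
          rw [pow_succ', Module.End.mul_eq_comp, Submodule.comap_comp]
        _ ≤ W ((i + 1 : ℕ) - 1) := ih
        _ = W i := by congr 1; lia
    exact (le_inf preimage_succ le_rfl).trans (h.gr_injective i)

theorem eq_comap_map_add_two (h : IsMonodromyFiltration N W) (m : ℕ) :
    W m = ((W (m + 2 : ℕ)).map (N ^ (m + 2))).comap (N ^ (m + 1)) := by
  rw [← h.neg_eq_map_pow, show -((m + 2 : ℕ) : ℤ) = -(m + 1 : ℕ) - 1 by lia, h.comap_pow_eq]
  congr 1
  lia

theorem unique (h : IsMonodromyFiltration N W) (h' : IsMonodromyFiltration N W') : W = W' := by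
  obtain ⟨b, hb⟩ := h.eventually_top
  obtain ⟨b', hb'⟩ := h'.eventually_top
  have eq_of_ge (m : ℕ) : ∀ n : ℕ, m ≤ n → W n = W' n := by
    induction m using forall_nat_of_forall_ge_of_succ (max b b').toNat with
    | ge m hm =>
      intro n hn
      rw [hb n (by lia), hb' n (by lia)]
    | of_succ m ih =>
      intro n hn
      rw [h.eq_comap_map_add_two, h'.eq_comap_map_add_two, ih (n + 2) (by lia)]
  funext i
  obtain ⟨m, rfl | rfl⟩ := i.eq_nat_or_neg
  · exact eq_of_ge m m le_rfl
  · rw [h.neg_eq_map_pow, h'.neg_eq_map_pow, eq_of_ge m m le_rfl]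

end IsMonodromyFiltration

/-- The smallest increasing family `W` of submodules with `ker (N ^ k) ≤ W (k - 1)` and
`N (W i) ≤ W (i - 2)`: the submodule of index `l` is spanned by the `N ^ j v` with `N ^ k v = 0`
and `k - 1 - 2 * j ≤ l`. -/
def monodromyFiltration (N : Module.End R M) (l : ℤ) : Submodule R M :=
  ⨆ (j : ℕ) (k : ℕ) (_ : (k : ℤ) - 1 - 2 * j ≤ l), (LinearMap.ker (N ^ k)).map (N ^ j)

namespace monodromyFiltration

variable {N : Module.End R M}

theorem map_pow_ker_pow_le {j k : ℕ} {l : ℤ} (h : (k : ℤ) - 1 - 2 * j ≤ l) :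
    (LinearMap.ker (N ^ k)).map (N ^ j) ≤ monodromyFiltration N l :=
  le_iSup_of_le j <| le_iSup_of_le k <| le_iSup_of_le h le_rfl

theorem ker_pow_le {k : ℕ} {l : ℤ} (h : (k : ℤ) - 1 ≤ l) :
    LinearMap.ker (N ^ k) ≤ monodromyFiltration N l := by
  simpa only [pow_zero, Module.End.one_eq_id, Submodule.map_id] using
    map_pow_ker_pow_le (N := N) (j := 0) (k := k) (l := l) (by lia)

theorem le_of_forall_lt {l : ℤ} {p : Submodule R M}
    (h : ∀ j k : ℕ, (k : ℤ) - 1 - 2 * j ≤ l → j < k → (LinearMap.ker (N ^ k)).map (N ^ j) ≤ p) :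
    monodromyFiltration N l ≤ p := by
  refine iSup_le fun j => iSup₂_le fun k hkl => ?_
  rcases lt_or_ge j k with hjk | hkj
  · exact h j k hkl hjk
  · rintro _ ⟨v, hv, rfl⟩
    rw [Module.End.pow_map_zero_of_le hkj hv]
    exact p.zero_mem

variable (N)

theorem monotone : Monotone (monodromyFiltration N) :=
  fun _ _ hab => le_of_forall_lt fun _ _ hkl _ => map_pow_ker_pow_le (hkl.trans hab)

theorem map_le (i : ℤ) :
    (monodromyFiltration N i).map N ≤ monodromyFiltration N (i - 2) := by
  refine Submodule.map_le_iff_le_comap.mpr <| le_of_forall_lt fun j k hkl _ => ?_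
  rw [← Submodule.map_le_iff_le_comap, ← Submodule.map_comp, ← Module.End.mul_eq_comp, ← pow_succ']
  exact map_pow_ker_pow_le (by lia)

theorem neg_le_map_pow (i : ℕ) :
    monodromyFiltration N (-i) ≤ (monodromyFiltration N i).map (N ^ i) := by
  refine le_of_forall_lt fun j k hkl hjk => ?_
  obtain ⟨d, rfl⟩ : ∃ d, j = i + d := Nat.exists_eq_add_of_le (by lia)
  rw [pow_add, Module.End.mul_eq_comp, Submodule.map_comp]
  exact Submodule.map_mono (map_pow_ker_pow_le (by lia))

theorem comap_pow_le (i : ℕ) :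
    (monodromyFiltration N (-i - 1)).comap (N ^ i) ≤ monodromyFiltration N (i - 1) := by
  intro x hx
  rw [Submodule.mem_comap, show -(i : ℤ) - 1 = -(i + 1 : ℕ) by lia] at hx
  obtain ⟨y, hy, hyx⟩ := neg_le_map_pow N (i + 1) hx
  have hker : x - N y ∈ LinearMap.ker (N ^ i) := by
    rw [LinearMap.mem_ker, map_sub, ← Module.End.mul_apply, ← pow_succ, hyx, sub_self]
  have hNy : N y ∈ monodromyFiltration N (i - 1) :=
    monotone N (by lia) (map_le N _ (Submodule.mem_map_of_mem hy))
  simpa only [sub_add_cancel] using add_mem (ker_pow_le le_rfl hker) hNy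

variable {N}

theorem eq_bot {n : ℕ} (hn : N ^ n = 0) {i : ℤ} (hi : i ≤ -n) : monodromyFiltration N i = ⊥ := by
  refine eq_bot_iff.mpr <| le_of_forall_lt fun j k hkl hjk => ?_
  rw [pow_eq_zero_of_le (by lia) hn, Submodule.map_zero]

theorem eq_top {n : ℕ} (hn : N ^ n = 0) {i : ℤ} (hi : n ≤ i) : monodromyFiltration N i = ⊤ :=
  eq_top_iff.mpr <| by
    simpa only [hn, LinearMap.ker_zero] using ker_pow_le (N := N) (k := n) (l := i) (by lia)

theorem isMonodromyFiltration (hN : IsNilpotent N) :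
    IsMonodromyFiltration N (monodromyFiltration N) := by
  obtain ⟨n, hn⟩ := hN
  exact
    { mono := monotone N
      eventually_bot := ⟨-n, fun _ => eq_bot hn⟩
      eventually_top := ⟨n, fun _ => eq_top hn⟩
      map_le := map_le N
      gr_injective := fun i => inf_le_right.trans (comap_pow_le N i)
      gr_surjective := fun i => (neg_le_map_pow N i).trans le_sup_left }

end monodromyFiltration

theorem weight_filtration_existsUnique_general (N : Module.End R M) (hN : IsNilpotent N) :
    ∃! W : ℤ → Submodule R M, IsMonodromyFiltration N W :=
  have hW := monodromyFiltration.isMonodromyFiltration hN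
  ⟨monodromyFiltration N, hW, fun _ hW' => hW'.unique hW⟩

end Module

section GradedQuotients

variable {M₁ M₂ : Type*} [AddCommGroup M₁] [Module ℂ M₁] [AddCommGroup M₂] [Module ℂ M₂]
  {f : M₁ →ₗ[ℂ] M₂} {p q : Submodule ℂ M₁} {p' q' : Submodule ℂ M₂}
  (h1 : p ≤ Submodule.comap f p') (h2 : q ≤ Submodule.comap f q')

theorem inducedQuot_injective_iff :
    Function.Injective (inducedQuot f p q p' q' h1 h2) ↔ p ⊓ q'.comap f ≤ q := by
  rw [injective_iff_map_eq_zero, (Submodule.Quotient.mk_surjective _).forall]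
  simp only [inducedQuot, Submodule.mapQ_apply, Submodule.Quotient.mk_eq_zero,
    Submodule.mem_comap, Submodule.subtype_apply, LinearMap.coe_restrict_apply, Subtype.forall]
  exact ⟨fun h x hx => h x hx.1 hx.2, fun h x hxp hfx => h ⟨hxp, hfx⟩⟩

theorem inducedQuot_surjective_iff :
    Function.Surjective (inducedQuot f p q p' q' h1 h2) ↔ p' ≤ p.map f ⊔ q' := by
  simp only [Function.Surjective, (Submodule.Quotient.mk_surjective _).forall,
    (Submodule.Quotient.mk_surjective _).exists, inducedQuot, Submodule.mapQ_apply,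
    Submodule.Quotient.eq, Submodule.mem_comap, Submodule.subtype_apply, Submodule.coe_sub,
    LinearMap.coe_restrict_apply, Subtype.forall, Subtype.exists, exists_prop]
  refine forall₂_congr fun y _ => ?_
  simp only [Submodule.mem_sup, Submodule.mem_map, exists_exists_and_eq_and]
  refine exists_congr fun x => and_congr_right fun _ => ⟨fun hxy => ?_, ?_⟩
  · exact ⟨y - f x, by simpa only [neg_sub] using q'.neg_mem hxy, add_sub_cancel _ _⟩
  · rintro ⟨z, hz, rfl⟩
    simpa only [sub_add_cancel_left] using q'.neg_mem hz

end GradedQuotients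

theorem isWeightFiltration_iff {N : Module.End ℂ H} {W : ℤ → Submodule ℂ H} :
    IsWeightFiltration N W ↔ IsMonodromyFiltration N W := by
  constructor
  · intro h
    have hmap (i : ℤ) : (W i).map N ≤ W (i - 2) := Submodule.map_le_iff_le_comap.mpr (h.map_le i)
    have hpow {k : ℕ} {i j : ℤ} (hij : i - 2 * k ≤ j) : W i ≤ (W j).comap (N ^ k) :=
      Submodule.map_le_iff_le_comap.mp (map_pow_le_of_map_le h.mono hmap hij)
    have hgr (i : ℕ) := h.gr_bijective i (hpow (by lia)) (hpow (by lia))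
    exact
      { mono := h.mono
        eventually_bot := h.eventually_bot
        eventually_top := h.eventually_top
        map_le := hmap
        gr_injective := fun i => (inducedQuot_injective_iff _ _).mp (hgr i).injective
        gr_surjective := fun i => (inducedQuot_surjective_iff _ _).mp (hgr i).surjective }
  · intro h
    exact
      { mono := h.mono
        eventually_bot := h.eventually_bot
        eventually_top := h.eventually_top
        map_le := fun i => Submodule.map_le_iff_le_comap.mp (h.map_le i)
        gr_bijective := fun i _ _ =>
          ⟨(inducedQuot_injective_iff _ _).mpr (h.gr_injective i),
            (inducedQuot_surjective_iff _ _).mpr (h.gr_surjective i)⟩ }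

/-- Let `N` be a nilpotent endomorphism of a finite-dimensional complex
vector space `H`. Then there exists a unique increasing filtration `(W i)_{i ∈ ℤ}` of `H`,
with `W i = 0` for `i` small and `W i = H` for `i` large, such that `N (W i) ⊆ W (i-2)`
for all `i` and, for every `i ≥ 0`, the map `Gr_i H → Gr_{-i} H` induced by `N ^ i` is an
isomorphism. -/
theorem weight_filtration_existsUnique [FiniteDimensional ℂ H]
    (N : Module.End ℂ H) (hN : IsNilpotent N) :
    ∃! W : ℤ → Submodule ℂ H, IsWeightFiltration N W := by
  simpa only [isWeightFiltration_iff] using weight_filtration_existsUnique_general N hN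

end Paper
end

section
/- Let (N, Ñ) be infinitesimal automorphisms of (H, H̃, S), and let W^N and W^Ñ be the weight filtrations of N and Ñ. Then for every i ∈ ℤ, the orthogonal complement of W^N_i with respect to S equals W^Ñ_{−i−1}, i.e. (W^N_i)^⊥ = W^{Ñ}_{−i−1}. -/
namespace Paper

/-! ### Bilinear pairings between two spaces -/

/-- A bilinear pairing between two complex vector spaces is non-degenerate. -/
def Nondeg {M₁ M₂ : Type*} [AddCommGroup M₁] [Module ℂ M₁] [AddCommGroup M₂] [Module ℂ M₂]
    (S : M₁ →ₗ[ℂ] M₂ →ₗ[ℂ] ℂ) : Prop :=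
  (∀ x : M₁, (∀ y : M₂, S x y = 0) → x = 0) ∧ (∀ y : M₂, (∀ x : M₁, S x y = 0) → y = 0)

/-- The orthogonal complement in `M₂` of a subspace `p ⊆ M₁`, with respect to a
bilinear pairing `S : M₁ × M₂ → ℂ`. -/
def rightOrtho {M₁ M₂ : Type*} [AddCommGroup M₁] [Module ℂ M₁] [AddCommGroup M₂] [Module ℂ M₂]
    (S : M₁ →ₗ[ℂ] M₂ →ₗ[ℂ] ℂ) (p : Submodule ℂ M₁) : Submodule ℂ M₂ where
  carrier := {y | ∀ x ∈ p, S x y = 0}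
  add_mem' := by
    intro a b ha hb x hx
    rw [map_add, ha x hx, hb x hx, add_zero]
  zero_mem' := by
    intro x hx
    simp
  smul_mem' := by
    intro c y hy x hx
    rw [map_smul, hy x hx, smul_zero]

/-- The orthogonal complement in `M₁` of a subspace `q ⊆ M₂`, with respect to a
bilinear pairing `S : M₁ × M₂ → ℂ`. -/
def leftOrtho {M₁ M₂ : Type*} [AddCommGroup M₁] [Module ℂ M₁] [AddCommGroup M₂] [Module ℂ M₂]
    (S : M₁ →ₗ[ℂ] M₂ →ₗ[ℂ] ℂ) (q : Submodule ℂ M₂) : Submodule ℂ M₁ where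
  carrier := {x | ∀ y ∈ q, S x y = 0}
  add_mem' := by
    intro a b ha hb y hy
    simp [map_add, ha y hy, hb y hy]
  zero_mem' := by
    intro y hy
    simp
  smul_mem' := by
    intro c x hx y hy
    simp [map_smul, hx y hy]

variable {H : Type*} [AddCommGroup H] [Module ℂ H]

/-!
For `m ≥ 0` the bijections on graded pieces integrate, by descending induction on `m`, to
`W (-m) = N ^ m (W m)` and `W (m - 1) = (N ^ m)⁻¹ (W (-m - 1))`. Since `N` and `-N'` are adjoint,
taking orthogonal complements turns images under `N ^ m` into preimages under `N' ^ m` and, when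
the pairing identifies `H'` with the dual of `H`, preimages into images; so it exchanges the two
descriptions. Hence the claim at `-(m + 2)` implies the claim at `m`, and the claim at `m` implies
the claim at `-m`. It is clear for large `m`, where `W m` is everything and `W' (-m - 1)` is zero.
-/

section DualAnnihilator

variable {K V₁ V₂ : Type*} [Field K] [AddCommGroup V₁] [Module K V₁] [AddCommGroup V₂] [Module K V₂]

theorem dualAnnihilator_comap (f : V₁ →ₗ[K] V₂) (p : Submodule K V₂) :
    (p.comap f).dualAnnihilator = p.dualAnnihilator.map f.dualMap := by
  have hker : p.comap f = LinearMap.ker (p.mkQ ∘ₗ f) := by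
    rw [LinearMap.ker_comp, Submodule.ker_mkQ]
  rw [hker, ← LinearMap.range_dualMap_eq_dualAnnihilator_ker, ← LinearMap.dualMap_comp_dualMap,
    LinearMap.range_comp, Submodule.range_dualMap_mkQ_eq]

end DualAnnihilator

section NegPow

variable {R M : Type*} [Ring R] [AddCommGroup M] [Module R M]

theorem map_neg_pow (f : Module.End R M) (k : ℕ) (p : Submodule R M) :
    p.map ((-f) ^ k) = p.map (f ^ k) := by
  obtain hk | hk := k.even_or_odd
  · rw [hk.neg_pow]
  · rw [hk.neg_pow, Submodule.map_neg]

theorem comap_neg_pow (f : Module.End R M) (k : ℕ) (p : Submodule R M) :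
    p.comap ((-f) ^ k) = p.comap (f ^ k) := by
  obtain hk | hk := k.even_or_odd
  · rw [hk.neg_pow]
  · rw [hk.neg_pow, Submodule.comap_neg]

end NegPow

theorem apply_pow_eq_of_adjoint {R M M' P : Type*} [CommSemiring R] [AddCommMonoid M] [Module R M]
    [AddCommMonoid M'] [Module R M'] [AddCommMonoid P] [Module R P] {S : M →ₗ[R] M' →ₗ[R] P}
    {f : Module.End R M} {g : Module.End R M'} (hfg : ∀ x y, S (f x) y = S x (g y))
    (k : ℕ) (x : M) (y : M') : S ((f ^ k) x) y = S x ((g ^ k) y) := by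
  induction k generalizing y with
  | zero => rfl
  | succ k ih => rw [pow_succ' f, pow_succ g, Module.End.mul_apply, Module.End.mul_apply, hfg, ih]

section RightOrtho

variable {M₁ M₁' M₂ M₂' : Type*} [AddCommGroup M₁] [Module ℂ M₁] [AddCommGroup M₁'] [Module ℂ M₁']
  [AddCommGroup M₂] [Module ℂ M₂] [AddCommGroup M₂'] [Module ℂ M₂']
  {S₁ : M₁ →ₗ[ℂ] M₁' →ₗ[ℂ] ℂ} {S₂ : M₂ →ₗ[ℂ] M₂' →ₗ[ℂ] ℂ}
  {f : M₁ →ₗ[ℂ] M₂} {g : M₂' →ₗ[ℂ] M₁'}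

theorem Nondeg.flip_bijective [FiniteDimensional ℂ M₁] (hS : Nondeg S₁) :
    Function.Bijective S₁.flip := by
  have hleft : Function.Injective S₁ :=
    (injective_iff_map_eq_zero _).2 fun x hx => hS.1 x (LinearMap.congr_fun hx)
  have hright : Function.Injective S₁.flip :=
    (injective_iff_map_eq_zero _).2 fun y hy => hS.2 y (LinearMap.congr_fun hy)
  exact (LinearMap.IsPerfPair.of_injective hleft hright).bijective_right

theorem rightOrtho_top (hS : Function.Injective S₁.flip) : rightOrtho S₁ ⊤ = ⊥ := by
  refine (Submodule.eq_bot_iff _).2 fun y hy => hS ?_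
  ext x
  simpa using hy x Submodule.mem_top

theorem rightOrtho_map (hfg : ∀ x y, S₂ (f x) y = S₁ x (g y)) (p : Submodule ℂ M₁) :
    rightOrtho S₂ (p.map f) = (rightOrtho S₁ p).comap g := by
  ext y
  change (∀ z ∈ p.map f, S₂ z y = 0) ↔ ∀ x ∈ p, S₁ x (g y) = 0
  simp only [Submodule.mem_map, forall_exists_index, and_imp, forall_apply_eq_imp_iff₂, hfg]

theorem rightOrtho_comap (h₁ : Function.Injective S₁.flip) (h₂ : Function.Surjective S₂.flip)
    (hfg : ∀ x y, S₂ (f x) y = S₁ x (g y)) (p : Submodule ℂ M₂) :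
    rightOrtho S₁ (p.comap f) = (rightOrtho S₂ p).map g := by
  apply le_antisymm
  · intro y hy
    have hmem : S₁.flip y ∈ (p.comap f).dualAnnihilator :=
      (Submodule.mem_dualAnnihilator _).2 hy
    rw [dualAnnihilator_comap] at hmem
    obtain ⟨φ, hφ, hφy⟩ := hmem
    obtain ⟨w, rfl⟩ := h₂ φ
    refine ⟨w, (Submodule.mem_dualAnnihilator _).1 hφ, h₁ ?_⟩
    rw [← hφy]
    ext x
    exact (hfg x w).symm
  · rintro _ ⟨w, hw, rfl⟩ x hx
    rw [← hfg]
    exact hw (f x) hx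

end RightOrtho

section InducedQuot

variable {M₁ M₂ : Type*} [AddCommGroup M₁] [Module ℂ M₁] [AddCommGroup M₂] [Module ℂ M₂]
  {f : M₁ →ₗ[ℂ] M₂} {p q : Submodule ℂ M₁} {p' q' : Submodule ℂ M₂}
  {h1 : p ≤ p'.comap f} {h2 : q ≤ q'.comap f}

theorem inf_comap_le_of_inducedQuot_injective
    (h : Function.Injective (inducedQuot f p q p' q' h1 h2)) : p ⊓ q'.comap f ≤ q := by
  rintro x ⟨hxp, hxq'⟩
  have hzero : inducedQuot f p q p' q' h1 h2 (Submodule.Quotient.mk ⟨x, hxp⟩) = 0 := by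
    rw [inducedQuot, Submodule.mapQ_apply, Submodule.Quotient.mk_eq_zero]
    exact hxq'
  have hmk := (injective_iff_map_eq_zero _).1 h _ hzero
  rwa [Submodule.Quotient.mk_eq_zero] at hmk

theorem le_map_sup_of_inducedQuot_surjective
    (h : Function.Surjective (inducedQuot f p q p' q' h1 h2)) : p' ≤ p.map f ⊔ q' := by
  intro y hy
  obtain ⟨z, hz⟩ := h (Submodule.Quotient.mk ⟨y, hy⟩)
  obtain ⟨⟨x, hx⟩, rfl⟩ := Submodule.Quotient.mk_surjective _ z
  rw [inducedQuot, Submodule.mapQ_apply, Eq.comm, Submodule.Quotient.eq] at hz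
  exact Submodule.mem_sup.2 ⟨f x, Submodule.mem_map_of_mem hx, y - f x, hz, add_sub_cancel _ _⟩

end InducedQuot

namespace IsWeightFiltration

variable {N : Module.End ℂ H} {W : ℤ → Submodule ℂ H}

theorem le_comap_pow (hW : IsWeightFiltration N W) (k : ℕ) {i j : ℤ} (hij : i - 2 * k ≤ j) :
    W i ≤ (W j).comap (N ^ k) := by
  induction k generalizing j with
  | zero => exact hW.mono (by simpa using hij)
  | succ k ih =>
    intro x hx
    have hx' : (N ^ k) x ∈ W (j + 2) := ih (by push_cast at hij; linarith) hx
    have hNx := hW.map_le _ hx'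
    rwa [add_sub_cancel_right, Submodule.mem_comap, ← Module.End.mul_apply, ← pow_succ'] at hNx

theorem inducedQuot_bijective (hW : IsWeightFiltration N W) (m : ℕ) :
    Function.Bijective (inducedQuot (N ^ m) (W m) (W (m - 1)) (W (-m)) (W (-m - 1))
      (hW.le_comap_pow m (by linarith)) (hW.le_comap_pow m (by linarith))) :=
  hW.gr_bijective m _ _

theorem map_pow_eq (hW : IsWeightFiltration N W) (m : ℕ) : (W m).map (N ^ m) = W (-m) := by
  refine le_antisymm (Submodule.map_le_iff_le_comap.2 (hW.le_comap_pow m (by linarith))) ?_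
  induction m using Nat.strong_decreasing_induction with
  | base =>
    obtain ⟨a, ha⟩ := hW.eventually_bot
    exact ⟨(-a).toNat, fun m hm => (ha _ (by omega)).trans_le bot_le⟩
  | step m ih =>
    have hN : (W (m + 1 : ℕ)).map N ≤ W m :=
      Submodule.map_le_iff_le_comap.2 (by simpa using hW.le_comap_pow 1 (by push_cast; linarith))
    have hnext : W (-m - 1) ≤ (W m).map (N ^ m) := calc
      W (-m - 1) = W (-(m + 1 : ℕ)) := by congr 1; omega
      _ ≤ (W (m + 1 : ℕ)).map (N ^ (m + 1)) := ih _ m.lt_succ_self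
      _ = ((W (m + 1 : ℕ)).map N).map (N ^ m) := Submodule.map_comp _ _ _
      _ ≤ (W m).map (N ^ m) := Submodule.map_mono hN
    exact (le_map_sup_of_inducedQuot_surjective (hW.inducedQuot_bijective m).2).trans
      (sup_le le_rfl hnext)

theorem comap_pow_eq (hW : IsWeightFiltration N W) (m : ℕ) :
    (W (-m - 1)).comap (N ^ m) = W (m - 1) := by
  refine le_antisymm ?_ (hW.le_comap_pow m (by linarith))
  induction m using Nat.strong_decreasing_induction with
  | base =>
    obtain ⟨b, hb⟩ := hW.eventually_top
    exact ⟨b.toNat, fun m hm => le_top.trans_eq (hb _ (by omega)).symm⟩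
  | step m ih =>
    have hN : W (-m - 1) ≤ (W (-(m + 1 : ℕ) - 1)).comap N := by
      simpa using hW.le_comap_pow 1 (by push_cast; linarith)
    have hnext : (W (-m - 1)).comap (N ^ m) ≤ W m := calc
      (W (-m - 1)).comap (N ^ m) ≤ ((W (-(m + 1 : ℕ) - 1)).comap N).comap (N ^ m) :=
        Submodule.comap_mono hN
      _ = (W (-(m + 1 : ℕ) - 1)).comap (N ^ (m + 1)) := by rw [pow_succ']; rfl
      _ ≤ W ((m + 1 : ℕ) - 1) := ih _ m.lt_succ_self
      _ = W m := by congr 1; omega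
    exact (le_inf hnext le_rfl).trans
      (inf_comap_le_of_inducedQuot_injective (hW.inducedQuot_bijective m).1)

end IsWeightFiltration

section SkewAdjoint

variable {H' : Type*} [AddCommGroup H'] [Module ℂ H'] {S : H →ₗ[ℂ] H' →ₗ[ℂ] ℂ}
  {N : Module.End ℂ H} {N' : Module.End ℂ H'}

theorem apply_pow_eq_of_skewAdjoint (hNN' : ∀ a b, S (N a) b + S a (N' b) = 0)
    (k : ℕ) (a : H) (b : H') : S ((N ^ k) a) b = S a (((-N') ^ k) b) := by
  refine apply_pow_eq_of_adjoint (fun x y => ?_) k a b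
  rw [LinearMap.neg_apply, map_neg]
  exact eq_neg_of_add_eq_zero_left (hNN' x y)

theorem rightOrtho_map_pow (hNN' : ∀ a b, S (N a) b + S a (N' b) = 0)
    (k : ℕ) (p : Submodule ℂ H) :
    rightOrtho S (p.map (N ^ k)) = (rightOrtho S p).comap (N' ^ k) := by
  rw [rightOrtho_map (apply_pow_eq_of_skewAdjoint hNN' k), comap_neg_pow]

theorem rightOrtho_comap_pow (hS : Function.Bijective S.flip)
    (hNN' : ∀ a b, S (N a) b + S a (N' b) = 0) (k : ℕ) (p : Submodule ℂ H) :
    rightOrtho S (p.comap (N ^ k)) = (rightOrtho S p).map (N' ^ k) := by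
  rw [rightOrtho_comap hS.1 hS.2 (apply_pow_eq_of_skewAdjoint hNN' k), map_neg_pow]

variable {W : ℤ → Submodule ℂ H} {W' : ℤ → Submodule ℂ H'}

theorem rightOrtho_weight_neg (hNN' : ∀ a b, S (N a) b + S a (N' b) = 0)
    (hW : IsWeightFiltration N W) (hW' : IsWeightFiltration N' W') {m : ℕ}
    (h : rightOrtho S (W m) = W' (-m - 1)) : rightOrtho S (W (-m)) = W' (m - 1) := by
  rw [← hW.map_pow_eq, rightOrtho_map_pow hNN', h, hW'.comap_pow_eq]

theorem rightOrtho_weight_sub_one (hS : Function.Bijective S.flip)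
    (hNN' : ∀ a b, S (N a) b + S a (N' b) = 0)
    (hW : IsWeightFiltration N W) (hW' : IsWeightFiltration N' W') {m : ℕ}
    (h : rightOrtho S (W (-m - 1)) = W' m) : rightOrtho S (W (m - 1)) = W' (-m) := by
  rw [← hW.comap_pow_eq, rightOrtho_comap_pow hS hNN', h, hW'.map_pow_eq]

theorem rightOrtho_weight_natCast (hS : Function.Bijective S.flip)
    (hNN' : ∀ a b, S (N a) b + S a (N' b) = 0)
    (hW : IsWeightFiltration N W) (hW' : IsWeightFiltration N' W') (m : ℕ) :
    rightOrtho S (W m) = W' (-m - 1) := by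
  induction m using Nat.strong_decreasing_induction with
  | base =>
    obtain ⟨b, hb⟩ := hW.eventually_top
    obtain ⟨a, ha⟩ := hW'.eventually_bot
    refine ⟨max b.toNat (-a).toNat, fun m hm => ?_⟩
    rw [hb m (by omega), ha (-m - 1) (by omega), rightOrtho_top hS.1]
  | step m ih =>
    have hneg : rightOrtho S (W (-(m + 1 : ℕ) - 1)) = W' (m + 1 : ℕ) := calc
      rightOrtho S (W (-(m + 1 : ℕ) - 1)) = rightOrtho S (W (-(m + 2 : ℕ))) := by congr 2
      _ = W' ((m + 2 : ℕ) - 1) := rightOrtho_weight_neg hNN' hW hW' (ih (m + 2) (by omega))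
      _ = W' (m + 1 : ℕ) := by congr 1; omega
    calc
      rightOrtho S (W m) = rightOrtho S (W ((m + 1 : ℕ) - 1)) := by congr 2; omega
      _ = W' (-(m + 1 : ℕ)) := rightOrtho_weight_sub_one hS hNN' hW hW' hneg
      _ = W' (-m - 1) := by congr 1; omega

end SkewAdjoint

theorem weight_filtration_orthogonal_general
    {H' : Type*} [AddCommGroup H'] [Module ℂ H']
    (S : H →ₗ[ℂ] H' →ₗ[ℂ] ℂ) (hS : Function.Bijective S.flip)
    {N : Module.End ℂ H} {N' : Module.End ℂ H'}
    (hNN' : ∀ (a : H) (b : H'), S (N a) b + S a (N' b) = 0)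
    {W : ℤ → Submodule ℂ H} {W' : ℤ → Submodule ℂ H'}
    (hW : IsWeightFiltration N W) (hW' : IsWeightFiltration N' W') (i : ℤ) :
    rightOrtho S (W i) = W' (-i - 1) := by
  obtain ⟨m, rfl | rfl⟩ := i.eq_nat_or_neg
  · exact rightOrtho_weight_natCast hS hNN' hW hW' m
  · rw [neg_neg]
    exact rightOrtho_weight_neg hNN' hW hW' (rightOrtho_weight_natCast hS hNN' hW hW' m)

/-- For infinitesimal automorphisms `(N, N')` of `(H, H', S)`, the
orthogonal complement of `W^N_i` with respect to `S` is `W^{N'}_{-i-1}`. -/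
theorem weight_filtration_orthogonal [FiniteDimensional ℂ H]
    {H' : Type*} [AddCommGroup H'] [Module ℂ H'] [FiniteDimensional ℂ H']
    (S : H →ₗ[ℂ] H' →ₗ[ℂ] ℂ) (hS : Nondeg S)
    {N : Module.End ℂ H} {N' : Module.End ℂ H'}
    (hN : IsNilpotent N) (hN' : IsNilpotent N')
    (hNN' : ∀ (a : H) (b : H'), S (N a) b + S a (N' b) = 0)
    {W : ℤ → Submodule ℂ H} {W' : ℤ → Submodule ℂ H'}
    (hW : IsWeightFiltration N W) (hW' : IsWeightFiltration N' W') (i : ℤ) :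
    rightOrtho S (W i) = W' (-i - 1) :=
  weight_filtration_orthogonal_general S hS.flip_bijective hNN' hW hW' i

end Paper
end
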